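/- If D is nonempty, then the maximum of the objective function F over D equals (h*)²/2, where h* = √2 · (1 − T*). -/

import Mathlib

open Finset

noncomputable section

/-- Membership in the domain `D` of the optimization problem. -/
def memD (ℓ : ℕ) (a b x y : ℕ → ℝ) : Prop :=
  (∀ i ∈ Finset.Icc 1 ℓ, 0 < x i ∧ 0 < y i) ∧
  (∑ i ∈ Finset.Icc 1 ℓ, (x i + y i)) ≤ 1 ∧
  (∀ m ∈ Finset.Icc 1 ℓ,
    0 ≤ ∑ i ∈ Finset.Icc 1 m, (x i - (a i) ^ 2 / (2 * x i) - (b i) ^ 2 / (2 * y i)))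

/-- Membership in the domain `D̂`: elements of `D` where the cumulative condition holds with
equality for `m = ℓ`. -/
def memDhat (ℓ : ℕ) (a b x y : ℕ → ℝ) : Prop :=
  memD ℓ a b x y ∧
  (∑ i ∈ Finset.Icc 1 ℓ, (x i - (a i) ^ 2 / (2 * x i) - (b i) ^ 2 / (2 * y i))) = 0

/-- The convention `c_0 = c_ℓ = 0`. -/
def cbar (ℓ : ℕ) (c : ℕ → ℝ) (m : ℕ) : ℝ := if m = 0 ∨ m = ℓ then 0 else c m

/-- Membership in `D^m(c, c')`. -/
def memDm (a b : ℕ → ℝ) (N : ℝ) (m : ℕ) (c c' x y : ℝ) : Prop :=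
  0 < x ∧ 0 < y ∧ x + y ≤ N ∧ c + x - (a m) ^ 2 / (2 * x) - (b m) ^ 2 / (2 * y) = c'

/-- Membership in `D̃(c_1, …, c_{ℓ-1})`. -/
def memDtilde (ℓ : ℕ) (a b : ℕ → ℝ) (N : ℝ) (c x y : ℕ → ℝ) : Prop :=
  (∑ i ∈ Finset.Icc 1 ℓ, (x i + y i)) ≤ 1 ∧
  ∀ m ∈ Finset.Icc 1 ℓ, memDm a b N m (cbar ℓ c (m - 1)) (cbar ℓ c m) (x m) (y m)

/-- Membership in `D^c`. -/
def memDc (ℓ : ℕ) (a b : ℕ → ℝ) (N : ℝ) (c : ℕ → ℝ) : Prop :=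
  (∀ m ∈ Finset.Icc 1 (ℓ - 1), 0 ≤ c m) ∧ ∃ x y, memDtilde ℓ a b N c x y

/-- `(x, y)` minimizes `x + y` over `D^m(c, c')`. -/
def isArgminDm (a b : ℕ → ℝ) (N : ℝ) (m : ℕ) (c c' x y : ℝ) : Prop :=
  memDm a b N m c c' x y ∧ ∀ x' y' : ℝ, memDm a b N m c c' x' y' → x + y ≤ x' + y'

/-- The projection `D^m_x(c, C)` of `D^m(c, C)` to the first coordinate. -/
def Dmx (a b : ℕ → ℝ) (N : ℝ) (m : ℕ) (c C : ℝ) : Set ℝ :=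
  {x : ℝ | ∃ y : ℝ, memDm a b N m c C x y}

/-- The function `f(c̃) = sqrt((1 + c̃)/2 + sqrt(c̃²/4 + c̃))`. -/
def fval (c : ℝ) : ℝ := Real.sqrt ((1 + c) / 2 + Real.sqrt (c ^ 2 / 4 + c))

/-- `c̃ = (Σ b_i)² / (2 (Σ a_i)²)`. -/
def ctilde (ℓ : ℕ) (a b : ℕ → ℝ) : ℝ :=
  (∑ i ∈ Finset.Icc 1 ℓ, b i) ^ 2 / (2 * (∑ i ∈ Finset.Icc 1 ℓ, a i) ^ 2)

/-- The objective function `F` on `ℝ^{2ℓ}`. -/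
def Fobj (ℓ : ℕ) (a b x y : ℕ → ℝ) : ℝ :=
  (1 - ∑ i ∈ Finset.Icc 1 ℓ, (x i + y i)) *
  (1 - ∑ i ∈ Finset.Icc 1 ℓ, (y i + (a i) ^ 2 / (2 * x i) + (b i) ^ 2 / (2 * y i)))

/-- The late-expensive-obstacles assumption. -/
def LateExpensive (ℓ : ℕ) (a b : ℕ → ℝ) : Prop :=
  ∀ m, 1 ≤ m → m < ℓ →
    (∑ i ∈ Finset.Icc 1 m, b i) / (∑ i ∈ Finset.Icc 1 m, a i) <
      (∑ i ∈ Finset.Icc (m + 1) ℓ, b i) / (∑ i ∈ Finset.Icc (m + 1) ℓ, a i)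

/-- The ratio `(Σ_{j=p}^q b_j) / (Σ_{j=p}^q a_j)`. -/
def ratioBA (a b : ℕ → ℝ) (p q : ℕ) : ℝ :=
  (∑ j ∈ Finset.Icc p q, b j) / (∑ j ∈ Finset.Icc p q, a j)

/-- `u` (on indices `0, …, n+1`) is an admissible division into blocks. -/
def AdmissibleDiv (ℓ : ℕ) (a b : ℕ → ℝ) (n : ℕ) (u : ℕ → ℕ) : Prop :=
  u 0 = 0 ∧ u (n + 1) = ℓ ∧ (∀ i ≤ n, u i < u (i + 1)) ∧
  ∀ i ≤ n, ∀ m, u i < m → m < u (i + 1) →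
    ratioBA a b (u i + 1) m < ratioBA a b (m + 1) (u (i + 1))

/-- The canonical admissible division into blocks: the admissible division whose index
set is the intersection of the index sets of all admissible divisions into blocks. -/
def IsCanonicalDiv (ℓ : ℕ) (a b : ℕ → ℝ) (n : ℕ) (u : ℕ → ℕ) : Prop :=
  AdmissibleDiv ℓ a b n u ∧
  ∀ k, (∃ i ≤ n + 1, u i = k) ↔
    ∀ (n' : ℕ) (u' : ℕ → ℕ), AdmissibleDiv ℓ a b n' u' → ∃ i ≤ n' + 1, u' i = k

/-- The minimal time to cross one block with branching length `A` and obstacle length `B`. -/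
def blockTime (A B : ℝ) : ℝ :=
  A * fval (B ^ 2 / (2 * A ^ 2)) +
    B ^ 2 / (2 * A * (fval (B ^ 2 / (2 * A ^ 2)) - 1 / (2 * fval (B ^ 2 / (2 * A ^ 2)))))

/-- The total optimal time `T*` associated with a division into blocks. -/
def Tstar (a b : ℕ → ℝ) (n : ℕ) (u : ℕ → ℕ) : ℝ :=
  ∑ i ∈ Finset.range (n + 1),
    blockTime (∑ j ∈ Finset.Icc (u i + 1) (u (i + 1)), a j)
      (∑ j ∈ Finset.Icc (u i + 1) (u (i + 1)), b j)

/-- The coefficient appearing in the formula for the optimal `c_m`. -/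
def coefC (ℓ : ℕ) (a b : ℕ → ℝ) (m : ℕ) : ℝ :=
  ((∑ i ∈ Finset.Icc 1 m, a i) * (∑ i ∈ Finset.Icc (m + 1) ℓ, b i) -
    (∑ i ∈ Finset.Icc 1 m, b i) * (∑ i ∈ Finset.Icc (m + 1) ℓ, a i)) /
    (∑ i ∈ Finset.Icc 1 ℓ, b i)

/-!
Put `S = ∑ (xᵢ + yᵢ)`, `wᵢ = xᵢ - aᵢ² / (2 xᵢ) - bᵢ² / (2 yᵢ)` and `W = ∑ wᵢ`. Then
`F = (1 - S) (1 - S + W) ≤ (1 - (S - W / 2))²`, so everything rests on the bound `T* ≤ S - W / 2`,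
with equality at a point of `D` where `W = 0`.

The bound is Lagrangian duality. For a block whose ratio of obstacle to branching length is `r`
there are a multiplier `1/2 ≤ λ ≤ 1` and rates `f`, `k` such that `(a f, b k)` minimizes
`x + y - λ w` for every obstacle `(a, b)`; since the slacks `w` of these minimizers cancel over the
block, the block contributes at least its block time. The ratios of the blocks of the canonical
division are antitone (otherwise two neighbouring blocks could be merged), hence so are the
multipliers, and summation by parts combines the blocks because the partial sums of `w` are
nonnegative. Conversely, the minimizers are themselves feasible because each block is admissible.
-/

section Mediant

variable {K : Type*} [Field K] [LinearOrder K] [IsStrictOrderedRing K] {a b c d e : K}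

lemma lt_add_div_add (hb : 0 < b) (hd : 0 < d) (h₁ : e < a / b) (h₂ : e < c / d) :
    e < (a + c) / (b + d) := by
  rw [lt_div_iff₀ hb] at h₁
  rw [lt_div_iff₀ hd] at h₂
  rw [lt_div_iff₀ (add_pos hb hd)]
  linarith

lemma add_div_add_lt (hb : 0 < b) (hd : 0 < d) (h₁ : a / b < e) (h₂ : c / d < e) :
    (a + c) / (b + d) < e := by
  rw [div_lt_iff₀ hb] at h₁
  rw [div_lt_iff₀ hd] at h₂
  rw [div_lt_iff₀ (add_pos hb hd)]
  linarith

lemma div_lt_add_div_add (hb : 0 < b) (hd : 0 < d) (h : a / b < c / d) :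
    a / b < (a + c) / (b + d) := by
  rw [div_lt_div_iff₀ hb hd] at h
  rw [div_lt_div_iff₀ hb (add_pos hb hd)]
  linarith

lemma add_div_add_lt_div (hb : 0 < b) (hd : 0 < d) (h : a / b < c / d) :
    (a + c) / (b + d) < c / d := by
  rw [div_lt_div_iff₀ hb hd] at h
  rw [div_lt_div_iff₀ (add_pos hb hd) hd]
  linarith

end Mediant

section Sums

lemma sum_Icc_add_one_consecutive {M : Type*} [AddCommMonoid M] (g : ℕ → M) {p q r : ℕ}
    (hpq : p ≤ q) (hqr : q ≤ r) :
    ∑ i ∈ Icc (p + 1) q, g i + ∑ i ∈ Icc (q + 1) r, g i = ∑ i ∈ Icc (p + 1) r, g i := by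
  simpa only [Icc_add_one_left_eq_Ioc] using sum_Ioc_consecutive g hpq hqr

lemma sum_Icc_add_one_pos {p q s t : ℕ} {g : ℕ → ℝ} (hg : ∀ i ∈ Icc (p + 1) q, 0 < g i)
    (hps : p ≤ s) (hst : s < t) (htq : t ≤ q) : 0 < ∑ i ∈ Icc (s + 1) t, g i :=
  sum_pos (fun i hi ↦ hg i (Icc_subset_Icc (by omega) htq hi)) (nonempty_Icc.2 hst)

lemma mul_sum_range_le_sum_range_mul {c w : ℕ → ℝ} {n : ℕ}
    (hc : ∀ i < n, c (i + 1) ≤ c i) (hw : ∀ i < n, 0 ≤ ∑ j ∈ range (i + 1), w j) :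
    c n * ∑ i ∈ range (n + 1), w i ≤ ∑ i ∈ range (n + 1), c i * w i := by
  have by_parts := sum_range_by_parts c w (n + 1)
  simp only [smul_eq_mul, Nat.add_sub_cancel] at by_parts
  have correction_nonpos : ∑ i ∈ range n, (c (i + 1) - c i) * ∑ j ∈ range (i + 1), w j ≤ 0 :=
    sum_nonpos fun i hi ↦
      mul_nonpos_of_nonpos_of_nonneg (sub_nonpos.2 (hc i (mem_range.1 hi))) (hw i (mem_range.1 hi))
  linarith

end Sums

section Rates

/-- The factor `f` such that branching length `a` in a block of ratio `r` optimally takes time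
`a * f`. -/
def branchRate (r : ℝ) : ℝ := fval (r ^ 2 / 2)

/-- The factor `k` such that obstacle length `b` in a block of ratio `r` optimally takes time
`b * k`. -/
def obstacleRate (r : ℝ) : ℝ := r / (2 * (branchRate r - 1 / (2 * branchRate r)))

/-- The Lagrange multiplier attached to the constraint at the end of a block of ratio `r`, chosen
so that it equals both `2 * f ^ 2 * (1 - multiplier r)` and `2 * k ^ 2` for the two rates `f` and
`k`. -/
def multiplier (r : ℝ) : ℝ := 2 * branchRate r ^ 2 / (2 * branchRate r ^ 2 + 1)

variable {r s : ℝ}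

lemma branchRate_sq (r : ℝ) :
    branchRate r ^ 2 = (1 + r ^ 2 / 2) / 2 + √((r ^ 2 / 2) ^ 2 / 4 + r ^ 2 / 2) :=
  Real.sq_sqrt (by positivity)

lemma branchRate_pos (r : ℝ) : 0 < branchRate r :=
  Real.sqrt_pos.2 (by positivity)

lemma one_half_le_branchRate_sq (r : ℝ) : 1 / 2 ≤ branchRate r ^ 2 := by
  rw [branchRate_sq]
  linarith [sq_nonneg r, Real.sqrt_nonneg ((r ^ 2 / 2) ^ 2 / 4 + r ^ 2 / 2)]

lemma branchRate_quadratic (r : ℝ) :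
    (2 * branchRate r ^ 2 - 1) ^ 2 = r ^ 2 * (2 * branchRate r ^ 2 + 1) := by
  have sq_root : √((r ^ 2 / 2) ^ 2 / 4 + r ^ 2 / 2) ^ 2 = (r ^ 2 / 2) ^ 2 / 4 + r ^ 2 / 2 :=
    Real.sq_sqrt (by positivity)
  rw [branchRate_sq]
  linear_combination 4 * sq_root

lemma branchRate_mono (hr : 0 ≤ r) (hrs : r ≤ s) : branchRate r ≤ branchRate s := by
  unfold branchRate fval
  gcongr

lemma obstacleRate_eq (r : ℝ) :
    obstacleRate r = r * branchRate r / (2 * branchRate r ^ 2 - 1) := by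
  have hf := (branchRate_pos r).ne'
  have denominator : 2 * (branchRate r - 1 / (2 * branchRate r)) =
      (2 * branchRate r ^ 2 - 1) / branchRate r := by field_simp
  rw [obstacleRate, denominator, div_div_eq_mul_div]

lemma two_mul_branchRate_sq_sub_one_pos (hr : r ≠ 0) : 0 < 2 * branchRate r ^ 2 - 1 := by
  rw [branchRate_sq]
  linarith [sq_pos_of_ne_zero hr, Real.sqrt_nonneg ((r ^ 2 / 2) ^ 2 / 4 + r ^ 2 / 2)]

lemma obstacleRate_pos (hr : 0 < r) : 0 < obstacleRate r := by
  rw [obstacleRate_eq]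
  exact div_pos (mul_pos hr (branchRate_pos r)) (two_mul_branchRate_sq_sub_one_pos hr.ne')

lemma branchRate_sub_eq (hr : r ≠ 0) :
    branchRate r - 1 / (2 * branchRate r) = r / (2 * obstacleRate r) := by
  have double (z : ℝ) : 2 * (r / (2 * z)) = r / z := by ring
  rw [obstacleRate, double, div_div_cancel₀ hr]

lemma one_sub_multiplier (r : ℝ) : 1 - multiplier r = 1 / (2 * branchRate r ^ 2 + 1) := by
  rw [multiplier]
  field_simp
  ring

lemma multiplier_le_one (r : ℝ) : multiplier r ≤ 1 := by
  rw [← sub_nonneg, one_sub_multiplier]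
  positivity

lemma one_half_le_multiplier (r : ℝ) : 1 / 2 ≤ multiplier r := by
  rw [multiplier, le_div_iff₀ (by positivity)]
  linarith [one_half_le_branchRate_sq r]

lemma multiplier_mono (hr : 0 ≤ r) (hrs : r ≤ s) : multiplier r ≤ multiplier s := by
  rw [← sub_le_sub_iff_left 1, one_sub_multiplier, one_sub_multiplier]
  gcongr
  · exact (branchRate_pos r).le
  · exact branchRate_mono hr hrs

lemma multiplier_eq_branchRate (r : ℝ) :
    multiplier r = 2 * branchRate r ^ 2 * (1 - multiplier r) := by
  rw [one_sub_multiplier, multiplier, mul_one_div]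

lemma multiplier_eq_obstacleRate (hr : r ≠ 0) : multiplier r = 2 * obstacleRate r ^ 2 := by
  rw [obstacleRate_eq, div_pow, branchRate_quadratic, multiplier]
  field_simp

end Rates

section Lagrangian

/-- The summand `x - a² / (2 x) - b² / (2 y)` of the cumulative constraints defining `D`. -/
def slack (a b x y : ℝ) : ℝ := x - a ^ 2 / (2 * x) - b ^ 2 / (2 * y)

variable {r : ℝ} {ι : Type*}

lemma two_mul_le_add_sq_div {t x : ℝ} (hx : 0 < x) : 2 * t ≤ x + t ^ 2 / x := by
  have square : x + t ^ 2 / x - 2 * t = (x - t) ^ 2 / x := by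
    field_simp
    ring
  linarith [div_nonneg (sq_nonneg (x - t)) hx.le]

lemma slack_rates (hr : r ≠ 0) (a b : ℝ) :
    slack a b (a * branchRate r) (b * obstacleRate r) = (a * r - b) / (2 * obstacleRate r) := by
  have cancel (t z : ℝ) : t ^ 2 / (2 * (t * z)) = t * (1 / (2 * z)) := by
    rcases eq_or_ne t 0 with rfl | ht
    · simp
    · field_simp
  rw [slack, cancel, cancel]
  linear_combination a * branchRate_sub_eq hr

lemma lagrangian_eq (hr : r ≠ 0) (a b x y : ℝ) :
    x + y - multiplier r * slack a b x y =
      (1 - multiplier r) * (x + (a * branchRate r) ^ 2 / x) +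
        (y + (b * obstacleRate r) ^ 2 / y) := by
  rw [slack]
  linear_combination
    a ^ 2 / (2 * x) * multiplier_eq_branchRate r + b ^ 2 / (2 * y) * multiplier_eq_obstacleRate hr

lemma lagrangian_rates_le (hr : r ≠ 0) (a b : ℝ) {x y : ℝ} (hx : 0 < x) (hy : 0 < y) :
    a * branchRate r + b * obstacleRate r - multiplier r * ((a * r - b) / (2 * obstacleRate r)) ≤
      x + y - multiplier r * slack a b x y := by
  have sq_div (t : ℝ) : t + t ^ 2 / t = 2 * t := by rw [sq, mul_self_div_self, two_mul]
  rw [← slack_rates hr, lagrangian_eq hr, lagrangian_eq hr, sq_div, sq_div]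
  gcongr
  · exact sub_nonneg.2 (multiplier_le_one r)
  · exact two_mul_le_add_sq_div hx
  · exact two_mul_le_add_sq_div hy

lemma blockTime_eq (A B : ℝ) :
    blockTime A B = A * branchRate (B / A) + B * obstacleRate (B / A) := by
  have ratio_sq : B ^ 2 / (2 * A ^ 2) = (B / A) ^ 2 / 2 := by ring
  rw [blockTime, ratio_sq, ← branchRate, obstacleRate]
  generalize branchRate (B / A) - 1 / (2 * branchRate (B / A)) = z
  ring

lemma blockTime_le_sum_sub (s : Finset ι) {a b x y : ι → ℝ} (hA : 0 < ∑ i ∈ s, a i)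
    (hB : 0 < ∑ i ∈ s, b i) (hx : ∀ i ∈ s, 0 < x i) (hy : ∀ i ∈ s, 0 < y i) :
    blockTime (∑ i ∈ s, a i) (∑ i ∈ s, b i) ≤
      ∑ i ∈ s, (x i + y i) -
        multiplier ((∑ i ∈ s, b i) / ∑ i ∈ s, a i) * ∑ i ∈ s, slack (a i) (b i) (x i) (y i) := by
  rw [blockTime_eq]
  set r := (∑ i ∈ s, b i) / ∑ i ∈ s, a i with hr_def
  have hr : r ≠ 0 := (div_pos hB hA).ne'
  have slacks_cancel : ∑ i ∈ s, (a i * r - b i) / (2 * obstacleRate r) = 0 := by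
    rw [← sum_div, sum_sub_distrib, ← sum_mul, hr_def, mul_div_cancel₀ _ hA.ne', sub_self, zero_div]
  calc (∑ i ∈ s, a i) * branchRate r + (∑ i ∈ s, b i) * obstacleRate r
      = ∑ i ∈ s, (a i * branchRate r + b i * obstacleRate r -
          multiplier r * ((a i * r - b i) / (2 * obstacleRate r))) := by
        rw [sum_sub_distrib, ← mul_sum, slacks_cancel, sum_add_distrib, sum_mul, sum_mul,
          mul_zero, sub_zero]
    _ ≤ ∑ i ∈ s, (x i + y i - multiplier r * slack (a i) (b i) (x i) (y i)) :=
        sum_le_sum fun i hi ↦ lagrangian_rates_le hr _ _ (hx i hi) (hy i hi)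
    _ = _ := by rw [sum_sub_distrib, mul_sum]

end Lagrangian

section RatioBA

variable {a b : ℕ → ℝ} {p q r : ℕ}

lemma ratioBA_eq_add_div_add (hpq : p ≤ q) (hqr : q ≤ r) :
    ratioBA a b (p + 1) r =
      (∑ i ∈ Icc (p + 1) q, b i + ∑ i ∈ Icc (q + 1) r, b i) /
        (∑ i ∈ Icc (p + 1) q, a i + ∑ i ∈ Icc (q + 1) r, a i) := by
  rw [sum_Icc_add_one_consecutive b hpq hqr, sum_Icc_add_one_consecutive a hpq hqr, ratioBA]

/-- The block `p + 1, …, q` cannot be cut so that its first part has at least the ratio of the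
second: the condition that `AdmissibleDiv` imposes on each block. -/
def IsAdmissibleBlock (a b : ℕ → ℝ) (p q : ℕ) : Prop :=
  ∀ m, p < m → m < q → ratioBA a b (p + 1) m < ratioBA a b (m + 1) q

lemma IsAdmissibleBlock.ratioBA_le {m : ℕ} (h : IsAdmissibleBlock a b p q)
    (ha : ∀ i ∈ Icc (p + 1) q, 0 < a i) (hpm : p < m) (hmq : m ≤ q) :
    ratioBA a b (p + 1) m ≤ ratioBA a b (p + 1) q := by
  rcases hmq.eq_or_lt with rfl | hmq
  · rfl
  · rw [ratioBA_eq_add_div_add hpm.le hmq.le]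
    exact (div_lt_add_div_add (sum_Icc_add_one_pos ha le_rfl hpm hmq.le)
      (sum_Icc_add_one_pos ha hpm.le hmq le_rfl) (h m hpm hmq)).le

lemma IsAdmissibleBlock.append (hleft : IsAdmissibleBlock a b p q)
    (hright : IsAdmissibleBlock a b q r) (ha : ∀ i ∈ Icc (p + 1) r, 0 < a i) (hpq : p < q)
    (hqr : q < r) (hlt : ratioBA a b (p + 1) q < ratioBA a b (q + 1) r) :
    IsAdmissibleBlock a b p r := by
  intro m hpm hmr
  have pos {s t : ℕ} (hps : p ≤ s) (hst : s < t) (htr : t ≤ r) :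
      0 < ∑ i ∈ Icc (s + 1) t, a i := sum_Icc_add_one_pos ha hps hst htr
  rcases lt_trichotomy m q with hmq | rfl | hqm
  · have hcut := hleft m hpm hmq
    have hfirst : ratioBA a b (p + 1) m < ratioBA a b (p + 1) q := by
      rw [ratioBA_eq_add_div_add hpm.le hmq.le]
      exact div_lt_add_div_add (pos le_rfl hpm hmr.le) (pos hpm.le hmq hqr.le) hcut
    rw [ratioBA_eq_add_div_add hmq.le hqr.le]
    exact lt_add_div_add (pos hpm.le hmq hqr.le) (pos hpq.le hqr le_rfl) hcut (hfirst.trans hlt)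
  · exact hlt
  · have hcut := hright m hqm hmr
    have hlast : ratioBA a b (q + 1) r < ratioBA a b (m + 1) r := by
      rw [ratioBA_eq_add_div_add hqm.le hmr.le]
      exact add_div_add_lt_div (pos hpq.le hqm hmr.le) (pos hpm.le hmr le_rfl) hcut
    rw [ratioBA_eq_add_div_add hpq.le hqm.le]
    exact add_div_add_lt (pos le_rfl hpq hqr.le) (pos hpq.le hqm hmr.le) (hlt.trans hlast) hcut

end RatioBA

section Divisions

/-- `0 = u 0 < u 1 < … < u (n + 1) = ℓ`: a division of `1, …, ℓ` into `n + 1` blocks, with no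
admissibility requirement. -/
structure IsDivision (ℓ n : ℕ) (u : ℕ → ℕ) : Prop where
  map_zero : u 0 = 0
  map_last : u (n + 1) = ℓ
  lt_succ : ∀ i ≤ n, u i < u (i + 1)

/-- The `j`-th block `{u j + 1, …, u (j + 1)}`. -/
def block (u : ℕ → ℕ) (j : ℕ) : Finset ℕ := Icc (u j + 1) (u (j + 1))

/-- The ratio of obstacle length to branching length of the `j`-th block. -/
def blockRatio (a b : ℕ → ℝ) (u : ℕ → ℕ) (j : ℕ) : ℝ :=
  (∑ i ∈ block u j, b i) / ∑ i ∈ block u j, a i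

/-- The index of the block containing `m`; it is junk for `m = 0` and for `m` beyond the last
block. -/
def blockIndex (n : ℕ) (u : ℕ → ℕ) (m : ℕ) : ℕ := Nat.findGreatest (fun i ↦ u i < m) n

variable {ℓ n j m : ℕ} {u : ℕ → ℕ} {a b : ℕ → ℝ}

lemma blockIndex_le (n : ℕ) (u : ℕ → ℕ) (m : ℕ) : blockIndex n u m ≤ n :=
  Nat.findGreatest_le n

lemma AdmissibleDiv.isDivision (h : AdmissibleDiv ℓ a b n u) : IsDivision ℓ n u :=
  ⟨h.1, h.2.1, h.2.2.1⟩

lemma AdmissibleDiv.isAdmissibleBlock (h : AdmissibleDiv ℓ a b n u) (hj : j ≤ n) :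
    IsAdmissibleBlock a b (u j) (u (j + 1)) :=
  h.2.2.2 j hj

namespace IsDivision

lemma strictMonoOn (h : IsDivision ℓ n u) : StrictMonoOn u (Set.Iic (n + 1)) :=
  strictMonoOn_Iic_of_lt_succ fun i hi ↦ h.lt_succ i (Nat.lt_succ_iff.1 hi)

lemma le (h : IsDivision ℓ n u) (hj : j ≤ n + 1) : u j ≤ ℓ :=
  h.map_last ▸ h.strictMonoOn.monotoneOn hj Set.self_mem_Iic hj

lemma block_subset (h : IsDivision ℓ n u) (hj : j ≤ n) : block u j ⊆ Icc 1 ℓ :=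
  Icc_subset_Icc (Nat.le_add_left 1 _) (h.le (Nat.succ_le_succ hj))

lemma sum_block_pos (h : IsDivision ℓ n u) {g : ℕ → ℝ} (hg : ∀ i ∈ Icc 1 ℓ, 0 < g i)
    (hj : j ≤ n) :
    0 < ∑ i ∈ block u j, g i :=
  sum_Icc_add_one_pos hg (Nat.zero_le _) (h.lt_succ j hj) (h.le (Nat.succ_le_succ hj))

lemma blockRatio_pos (h : IsDivision ℓ n u) (ha : ∀ i ∈ Icc 1 ℓ, 0 < a i)
    (hb : ∀ i ∈ Icc 1 ℓ, 0 < b i) (hj : j ≤ n) :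
    0 < blockRatio a b u j :=
  div_pos (h.sum_block_pos hb hj) (h.sum_block_pos ha hj)

lemma sum_range_sum_block (h : IsDivision ℓ n u) {M : Type*} [AddCommMonoid M] (g : ℕ → M)
    (hj : j ≤ n + 1) :
    ∑ k ∈ range j, ∑ i ∈ block u k, g i = ∑ i ∈ Icc 1 (u j), g i := by
  induction j with
  | zero => simp [h.map_zero]
  | succ j ih =>
    rw [sum_range_succ, ih (by omega), block,
      ← sum_Icc_add_one_consecutive g (Nat.zero_le (u j)) (h.lt_succ j (by omega)).le]

lemma blockIndex_eq (h : IsDivision ℓ n u) (hj : j ≤ n) (hm : m ∈ block u j) :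
    blockIndex n u m = j := by
  obtain ⟨hjm, hmj⟩ := mem_Icc.1 hm
  refine Nat.findGreatest_eq_iff.2 ⟨hj, fun _ ↦ hjm, fun k hjk hkn ↦ not_lt.2 (hmj.trans ?_)⟩
  exact h.strictMonoOn.monotoneOn (Set.mem_Iic.2 (by omega)) (Set.mem_Iic.2 (by omega)) hjk

lemma mem_block_blockIndex (h : IsDivision ℓ n u) (hm : m ∈ Icc 1 ℓ) :
    m ∈ block u (blockIndex n u m) := by
  obtain ⟨hm1, hmℓ⟩ := mem_Icc.1 hm
  have hzero : u 0 < m := h.map_zero.trans_lt hm1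
  refine mem_Icc.2 ⟨Nat.findGreatest_spec (P := fun i ↦ u i < m) n.zero_le hzero, ?_⟩
  rcases (blockIndex_le n u m).eq_or_lt with hlast | hlt
  · rwa [hlast, h.map_last]
  · exact not_lt.1 (Nat.findGreatest_is_greatest (P := fun i ↦ u i < m) (Nat.lt_succ_self _) hlt)

end IsDivision

end Divisions

section Merging

/-- The sequence `u` with its `k`-th term left out; for a division this merges the two blocks that
meet at `u k`. -/
def eraseTerm (u : ℕ → ℕ) (k i : ℕ) : ℕ := if i < k then u i else u (i + 1)

variable {ℓ n i j k : ℕ} {u : ℕ → ℕ} {a b : ℕ → ℝ}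

lemma eraseTerm_of_lt (hik : i < k) : eraseTerm u k i = u i := if_pos hik

lemma eraseTerm_of_le (hki : k ≤ i) : eraseTerm u k i = u (i + 1) := if_neg (not_lt.2 hki)

lemma eraseTerm_ne (hu : StrictMonoOn u (Set.Iic (n + 1))) (hk : k ≤ n + 1) (hi : i ≤ n) :
    eraseTerm u k i ≠ u k := by
  rcases lt_or_ge i k with hik | hki
  · rw [eraseTerm_of_lt hik]
    exact (hu (Set.mem_Iic.2 (by omega)) hk hik).ne
  · rw [eraseTerm_of_le hki]
    exact (hu hk (Set.mem_Iic.2 (by omega)) (by omega)).ne'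

lemma AdmissibleDiv.merge (h : AdmissibleDiv ℓ a b (n + 1) u) (ha : ∀ i ∈ Icc 1 ℓ, 0 < a i)
    (hj : j ≤ n) (hlt : blockRatio a b u j < blockRatio a b u (j + 1)) :
    AdmissibleDiv ℓ a b n (eraseTerm u (j + 1)) := by
  have hu := h.isDivision
  have lt_left : u j < u (j + 1) := hu.lt_succ j (by omega)
  have lt_right : u (j + 1) < u (j + 2) := hu.lt_succ (j + 1) (by omega)
  have merged : IsAdmissibleBlock a b (u j) (u (j + 2)) :=
    (h.isAdmissibleBlock (by omega)).append (h.isAdmissibleBlock (by omega))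
      (fun i hi ↦ ha i (Icc_subset_Icc (by omega) (hu.le (by omega)) hi)) lt_left lt_right hlt
  have blocks (i : ℕ) (hi : i ≤ n) :
      eraseTerm u (j + 1) i < eraseTerm u (j + 1) (i + 1) ∧
        IsAdmissibleBlock a b (eraseTerm u (j + 1) i) (eraseTerm u (j + 1) (i + 1)) := by
    rcases lt_trichotomy i j with hij | rfl | hji
    · rw [eraseTerm_of_lt (by omega), eraseTerm_of_lt (by omega)]
      exact ⟨hu.lt_succ i (by omega), h.isAdmissibleBlock (by omega)⟩
    · rw [eraseTerm_of_lt (by omega), eraseTerm_of_le le_rfl]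
      exact ⟨lt_left.trans lt_right, merged⟩
    · rw [eraseTerm_of_le (by omega), eraseTerm_of_le (by omega)]
      exact ⟨hu.lt_succ (i + 1) (by omega), h.isAdmissibleBlock (by omega)⟩
  refine ⟨?_, ?_, fun i hi ↦ (blocks i hi).1, fun i hi ↦ (blocks i hi).2⟩
  · rw [eraseTerm_of_lt (Nat.succ_pos j), hu.map_zero]
  · rw [eraseTerm_of_le (by omega), hu.map_last]

lemma IsCanonicalDiv.blockRatio_antitone (h : IsCanonicalDiv ℓ a b n u)
    (ha : ∀ i ∈ Icc 1 ℓ, 0 < a i) (hj : j < n) :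
    blockRatio a b u (j + 1) ≤ blockRatio a b u j := by
  by_contra! hlt
  obtain ⟨n, rfl⟩ := Nat.exists_eq_succ_of_ne_zero (Nat.ne_zero_of_lt hj)
  obtain ⟨i, hi, hij⟩ := (h.2 (u (j + 1))).1 ⟨j + 1, by omega, rfl⟩ n _
    (h.1.merge ha (Nat.lt_succ_iff.1 hj) hlt)
  exact eraseTerm_ne h.1.isDivision.strictMonoOn (by omega) hi hij

end Merging

section LowerBound

variable {ℓ n : ℕ} {u : ℕ → ℕ} {a b x y : ℕ → ℝ}

lemma memD.sum_slack_nonneg (hD : memD ℓ a b x y) {m : ℕ} (hm : m ≤ ℓ) :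
    0 ≤ ∑ i ∈ Icc 1 m, slack (a i) (b i) (x i) (y i) := by
  rcases m.eq_zero_or_pos with rfl | hpos
  · simp
  · exact hD.2.2 m (mem_Icc.2 ⟨hpos, hm⟩)

lemma Tstar_le_sum_sub (hu : IsDivision ℓ n u) (ha : ∀ i ∈ Icc 1 ℓ, 0 < a i)
    (hb : ∀ i ∈ Icc 1 ℓ, 0 < b i) (hanti : ∀ j < n, blockRatio a b u (j + 1) ≤ blockRatio a b u j)
    (hD : memD ℓ a b x y) :
    Tstar a b n u ≤ ∑ i ∈ Icc 1 ℓ, (x i + y i) -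
      (∑ i ∈ Icc 1 ℓ, slack (a i) (b i) (x i) (y i)) / 2 := by
  let w i := slack (a i) (b i) (x i) (y i)
  let c j := multiplier (blockRatio a b u j)
  have block_bound (j : ℕ) (hj : j ∈ range (n + 1)) :
      blockTime (∑ i ∈ block u j, a i) (∑ i ∈ block u j, b i) ≤
        ∑ i ∈ block u j, (x i + y i) - c j * ∑ i ∈ block u j, w i := by
    have hjn : j ≤ n := Nat.lt_succ_iff.1 (mem_range.1 hj)
    have pos i (hi : i ∈ block u j) := hD.1 i (hu.block_subset hjn hi)
    exact blockTime_le_sum_sub _ (hu.sum_block_pos ha hjn) (hu.sum_block_pos hb hjn)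
      (fun i hi ↦ (pos i hi).1) (fun i hi ↦ (pos i hi).2)
  have partial_sum_nonneg (j : ℕ) (hj : j < n) :
      0 ≤ ∑ k ∈ range (j + 1), ∑ i ∈ block u k, w i := by
    rw [hu.sum_range_sum_block w (by omega)]
    exact hD.sum_slack_nonneg (hu.le (by omega))
  have by_parts : c n * ∑ i ∈ Icc 1 ℓ, w i ≤ ∑ j ∈ range (n + 1), c j * ∑ i ∈ block u j, w i := by
    rw [← hu.map_last, ← hu.sum_range_sum_block w le_rfl]
    exact mul_sum_range_le_sum_range_mul
      (fun j hj ↦ multiplier_mono (hu.blockRatio_pos ha hb hj).le (hanti j hj)) partial_sum_nonneg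
  have half_le : 1 / 2 * ∑ i ∈ Icc 1 ℓ, w i ≤ c n * ∑ i ∈ Icc 1 ℓ, w i :=
    mul_le_mul_of_nonneg_right (one_half_le_multiplier _) (hD.sum_slack_nonneg le_rfl)
  calc Tstar a b n u
      ≤ ∑ j ∈ range (n + 1), (∑ i ∈ block u j, (x i + y i) - c j * ∑ i ∈ block u j, w i) :=
        sum_le_sum block_bound
    _ = ∑ i ∈ Icc 1 ℓ, (x i + y i) - ∑ j ∈ range (n + 1), c j * ∑ i ∈ block u j, w i := by
        rw [sum_sub_distrib, hu.sum_range_sum_block _ le_rfl, hu.map_last]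
    _ ≤ ∑ i ∈ Icc 1 ℓ, (x i + y i) - (∑ i ∈ Icc 1 ℓ, w i) / 2 := by linarith

end LowerBound

section Optimum

/-- The optimal `x`: in each block, `a i` times the branch rate of that block. -/
def optX (a b : ℕ → ℝ) (n : ℕ) (u : ℕ → ℕ) (i : ℕ) : ℝ :=
  a i * branchRate (blockRatio a b u (blockIndex n u i))

/-- The optimal `y`: in each block, `b i` times the obstacle rate of that block. -/
def optY (a b : ℕ → ℝ) (n : ℕ) (u : ℕ → ℕ) (i : ℕ) : ℝ :=
  b i * obstacleRate (blockRatio a b u (blockIndex n u i))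

/-- The slack of the `i`-th obstacle at the optimal point. -/
def optSlack (a b : ℕ → ℝ) (n : ℕ) (u : ℕ → ℕ) (i : ℕ) : ℝ :=
  slack (a i) (b i) (optX a b n u i) (optY a b n u i)

variable {ℓ n j m : ℕ} {u : ℕ → ℕ} {a b : ℕ → ℝ}

lemma optX_pos {i : ℕ} (hai : 0 < a i) : 0 < optX a b n u i :=
  mul_pos hai (branchRate_pos _)

namespace IsDivision

lemma sum_block_opt (hu : IsDivision ℓ n u) (hj : j ≤ n) :
    ∑ i ∈ block u j, (optX a b n u i + optY a b n u i) =
      blockTime (∑ i ∈ block u j, a i) (∑ i ∈ block u j, b i) := by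
  rw [blockTime_eq, sum_mul, sum_mul, ← sum_add_distrib]
  refine sum_congr rfl fun i hi ↦ ?_
  rw [optX, optY, hu.blockIndex_eq hj hi, blockRatio]

lemma sum_opt (hu : IsDivision ℓ n u) :
    ∑ i ∈ Icc 1 ℓ, (optX a b n u i + optY a b n u i) = Tstar a b n u := by
  rw [← hu.map_last, ← hu.sum_range_sum_block _ le_rfl]
  exact sum_congr rfl fun j hj ↦ hu.sum_block_opt (Nat.lt_succ_iff.1 (mem_range.1 hj))

lemma optY_pos (hu : IsDivision ℓ n u) (ha : ∀ i ∈ Icc 1 ℓ, 0 < a i)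
    (hb : ∀ i ∈ Icc 1 ℓ, 0 < b i) (hm : m ∈ Icc 1 ℓ) : 0 < optY a b n u m :=
  mul_pos (hb m hm) (obstacleRate_pos (hu.blockRatio_pos ha hb (blockIndex_le n u m)))

lemma sum_optSlack_of_subset_block (hu : IsDivision ℓ n u) (ha : ∀ i ∈ Icc 1 ℓ, 0 < a i)
    (hb : ∀ i ∈ Icc 1 ℓ, 0 < b i) {s : Finset ℕ} (hj : j ≤ n) (hs : s ⊆ block u j) :
    ∑ i ∈ s, optSlack a b n u i =
      ((∑ i ∈ s, a i) * blockRatio a b u j - ∑ i ∈ s, b i) /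
        (2 * obstacleRate (blockRatio a b u j)) := by
  rw [sum_mul, ← sum_sub_distrib, sum_div]
  refine sum_congr rfl fun i hi ↦ ?_
  rw [optSlack, optX, optY, hu.blockIndex_eq hj (hs hi),
    slack_rates (hu.blockRatio_pos ha hb hj).ne']

lemma sum_block_optSlack (hu : IsDivision ℓ n u) (ha : ∀ i ∈ Icc 1 ℓ, 0 < a i)
    (hb : ∀ i ∈ Icc 1 ℓ, 0 < b i) (hj : j ≤ n) :
    ∑ i ∈ block u j, optSlack a b n u i = 0 := by
  rw [hu.sum_optSlack_of_subset_block ha hb hj subset_rfl, blockRatio,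
    mul_div_cancel₀ _ (hu.sum_block_pos ha hj).ne', sub_self, zero_div]

lemma sum_Icc_optSlack (hu : IsDivision ℓ n u) (ha : ∀ i ∈ Icc 1 ℓ, 0 < a i)
    (hb : ∀ i ∈ Icc 1 ℓ, 0 < b i) (hj : j ≤ n + 1) :
    ∑ i ∈ Icc 1 (u j), optSlack a b n u i = 0 := by
  rw [← hu.sum_range_sum_block _ hj]
  refine sum_eq_zero fun k hk ↦ hu.sum_block_optSlack ha hb ?_
  have := mem_range.1 hk
  omega

end IsDivision

namespace AdmissibleDiv

lemma sum_Icc_block_optSlack_nonneg (h : AdmissibleDiv ℓ a b n u) (ha : ∀ i ∈ Icc 1 ℓ, 0 < a i)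
    (hb : ∀ i ∈ Icc 1 ℓ, 0 < b i) (hj : j ≤ n) (hm : m ∈ block u j) :
    0 ≤ ∑ i ∈ Icc (u j + 1) m, optSlack a b n u i := by
  have hu := h.isDivision
  obtain ⟨hjm, hmj⟩ := mem_Icc.1 hm
  have hpos := sum_Icc_add_one_pos ha (Nat.zero_le _) hjm (hmj.trans (hu.le (by omega)))
  have hratio : ratioBA a b (u j + 1) m ≤ blockRatio a b u j :=
    (h.isAdmissibleBlock hj).ratioBA_le (fun i hi ↦ ha i (hu.block_subset hj hi)) hjm hmj
  rw [ratioBA, div_le_iff₀ hpos, mul_comm] at hratio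
  rw [hu.sum_optSlack_of_subset_block ha hb hj (Icc_subset_Icc_right hmj)]
  have := obstacleRate_pos (hu.blockRatio_pos ha hb hj)
  exact div_nonneg (sub_nonneg.2 hratio) (by positivity)

lemma sum_optSlack_nonneg (h : AdmissibleDiv ℓ a b n u) (ha : ∀ i ∈ Icc 1 ℓ, 0 < a i)
    (hb : ∀ i ∈ Icc 1 ℓ, 0 < b i) (hm : m ∈ Icc 1 ℓ) :
    0 ≤ ∑ i ∈ Icc 1 m, optSlack a b n u i := by
  have hu := h.isDivision
  have hidx := blockIndex_le n u m
  have hblock := hu.mem_block_blockIndex hm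
  have hlt : u (blockIndex n u m) < m := (mem_Icc.1 hblock).1
  rw [← zero_add 1, ← sum_Icc_add_one_consecutive _ (Nat.zero_le _) hlt.le, zero_add,
    hu.sum_Icc_optSlack ha hb (by omega), zero_add]
  exact h.sum_Icc_block_optSlack_nonneg ha hb hidx hblock

lemma memD_opt (h : AdmissibleDiv ℓ a b n u) (ha : ∀ i ∈ Icc 1 ℓ, 0 < a i)
    (hb : ∀ i ∈ Icc 1 ℓ, 0 < b i) (hT : Tstar a b n u ≤ 1) :
    memD ℓ a b (optX a b n u) (optY a b n u) :=
  ⟨fun i hi ↦ ⟨optX_pos (ha i hi), h.isDivision.optY_pos ha hb hi⟩,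
    h.isDivision.sum_opt.trans_le hT, fun _ hm ↦ h.sum_optSlack_nonneg ha hb hm⟩

end AdmissibleDiv

end Optimum

section Objective

variable {ℓ n : ℕ} {u : ℕ → ℕ} {a b x y : ℕ → ℝ}

lemma Fobj_eq (ℓ : ℕ) (a b x y : ℕ → ℝ) :
    Fobj ℓ a b x y = (1 - ∑ i ∈ Icc 1 ℓ, (x i + y i)) *
      (1 - ∑ i ∈ Icc 1 ℓ, (x i + y i) + ∑ i ∈ Icc 1 ℓ, slack (a i) (b i) (x i) (y i)) := by
  rw [Fobj, sub_add, ← sum_sub_distrib]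
  simp only [slack]
  congr! 3
  ring

lemma Fobj_opt (hu : IsDivision ℓ n u) (ha : ∀ i ∈ Icc 1 ℓ, 0 < a i)
    (hb : ∀ i ∈ Icc 1 ℓ, 0 < b i) :
    Fobj ℓ a b (optX a b n u) (optY a b n u) = (1 - Tstar a b n u) ^ 2 := by
  have slack_zero : ∑ i ∈ Icc 1 ℓ, optSlack a b n u i = 0 :=
    hu.map_last ▸ hu.sum_Icc_optSlack ha hb le_rfl
  simp only [optSlack] at slack_zero
  rw [Fobj_eq, hu.sum_opt, slack_zero, add_zero, sq]

lemma Fobj_le_sq (hD : memD ℓ a b x y) {T : ℝ}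
    (hT : T ≤ ∑ i ∈ Icc 1 ℓ, (x i + y i) -
      (∑ i ∈ Icc 1 ℓ, slack (a i) (b i) (x i) (y i)) / 2) :
    Fobj ℓ a b x y ≤ (1 - T) ^ 2 := by
  have hS := hD.2.1
  have hW := hD.sum_slack_nonneg le_rfl
  rw [Fobj_eq]
  set S := ∑ i ∈ Icc 1 ℓ, (x i + y i)
  set W := ∑ i ∈ Icc 1 ℓ, slack (a i) (b i) (x i) (y i)
  calc (1 - S) * (1 - S + W) ≤ (1 - (S - W / 2)) ^ 2 := by linarith [sq_nonneg W]
    _ ≤ (1 - T) ^ 2 := pow_le_pow_left₀ (by linarith) (by linarith) 2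

end Objective

/-- If `D` is nonempty, the maximum of `F` over `D` equals `(h*)²/2` with
`h* = √2 (1 − T*)`, where `T*` is the total optimal time of the canonical admissible
division into blocks. -/
theorem max_over_D_general (ℓ : ℕ) (hℓ : 1 ≤ ℓ) (a b : ℕ → ℝ)
    (ha : ∀ i ∈ Finset.Icc 1 ℓ, 0 < a i) (hb : ∀ i ∈ Finset.Icc 1 ℓ, 0 < b i)
    (nstar : ℕ) (ustar : ℕ → ℕ) (hcanon : IsCanonicalDiv ℓ a b nstar ustar)
    (hD : ∃ x y : ℕ → ℝ, memD ℓ a b x y) :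
    IsGreatest {v : ℝ | ∃ x y : ℕ → ℝ, memD ℓ a b x y ∧ Fobj ℓ a b x y = v}
      ((Real.sqrt 2 * (1 - Tstar a b nstar ustar)) ^ 2 / 2) := by
  have hu := hcanon.1.isDivision
  have T_le {x y} (hxy : memD ℓ a b x y) := Tstar_le_sum_sub hu ha hb
    (fun _ hj ↦ hcanon.blockRatio_antitone ha hj) hxy
  have value : (√2 * (1 - Tstar a b nstar ustar)) ^ 2 / 2 = (1 - Tstar a b nstar ustar) ^ 2 := by
    rw [mul_pow, Real.sq_sqrt zero_le_two, mul_div_cancel_left₀ _ two_ne_zero]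
  rw [value]
  constructor
  · obtain ⟨x, y, hxy⟩ := hD
    have T_le_one : Tstar a b nstar ustar ≤ 1 := by
      linarith [T_le hxy, hxy.2.1, hxy.sum_slack_nonneg le_rfl]
    exact ⟨_, _, hcanon.1.memD_opt ha hb T_le_one, Fobj_opt hu ha hb⟩
  · rintro _ ⟨x, y, hxy, rfl⟩
    exact Fobj_le_sq hxy (T_le hxy)
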